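/- arXiv:2109.07219 — 2 statements merged into one kernel-verified Lean document; each statement's English description precedes it below -/
import Mathlib

section
/- Fix r₁, r₂, φ ∈ ℝ with r₁ ≠ 0, r₂ ≠ 0 and sin φ ≠ 0. With h = diag(1, 1, r₂²), a₁ = a₂ = 0, a₃ = (0, 0, r₂²), and 𝕀 the moment of inertia matrix in Jacobi coordinates, the horizontal (reduced) metric g_{μν} = h_{μν} − a_μᵀ 𝕀⁻¹ a_ν equals diag(1, 1, r₁² r₂²/(r₁² + r₂²)); in particular g₃₃ = r₂² − r₂⁴/(r₁² + r₂²) = r₁² r₂²/(r₁² + r₂²). -/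
open Matrix Real

/-!
The gauge potential is concentrated in the `φ` direction, where it points along the normal to the
plane of the three bodies. That normal is a principal axis of inertia with principal moment
`r₁² + r₂²`, so inverting the inertia matrix on the gauge potential amounts to division by this
number, and only the `φφ` entry of the metric is corrected.
-/

section HorizontalMetric

variable {ι n K : Type*} [Fintype n] [DecidableEq n]

/-- The horizontal (reduced) metric on shape space obtained from the metric `h` induced by the
choice of body frame, the gauge potential `a` and the inertia matrix `M`. `Matrix.inv` returns `0`
on a singular `M`, so there the definition yields `h`. -/
noncomputable def horizontalMetric [CommRing K] (M : Matrix n n K) (h : Matrix ι ι K)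
    (a : ι → n → K) : Matrix ι ι K :=
  of fun μ ν => h μ ν - a μ ⬝ᵥ M⁻¹ *ᵥ a ν

theorem horizontalMetric_eq_sub_single [DecidableEq ι] [CommRing K] (M : Matrix n n K)
    (h : Matrix ι ι K) {a : ι → n → K} {k : ι} (ha : ∀ μ, μ ≠ k → a μ = 0) :
    horizontalMetric M h a = h - single k k (a k ⬝ᵥ M⁻¹ *ᵥ a k) := by
  ext μ ν
  by_cases hμ : μ = k
  · by_cases hν : ν = k
    · simp [horizontalMetric, hμ, hν]
    · simp [horizontalMetric, ha ν hν, Ne.symm hν]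
  · simp [horizontalMetric, ha μ hμ, Ne.symm hμ]

theorem smul_inv_mulVec_of_mulVec_eq_smul [CommRing K] {M : Matrix n n K} (hM : IsUnit M.det)
    {c : K} {v : n → K} (hv : M *ᵥ v = c • v) : c • M⁻¹ *ᵥ v = v := by
  rw [← mulVec_smul, ← hv, mulVec_mulVec, nonsing_inv_mul M hM, one_mulVec]

theorem dotProduct_inv_mulVec_of_mulVec_eq_smul [Field K] {M : Matrix n n K} (hM : IsUnit M.det)
    {c : K} (hc : c ≠ 0) {v : n → K} (hv : M *ᵥ v = c • v) (w : n → K) :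
    w ⬝ᵥ M⁻¹ *ᵥ v = w ⬝ᵥ v / c := by
  rw [eq_div_iff hc, mul_comm, ← smul_eq_mul, ← dotProduct_smul,
    smul_inv_mulVec_of_mulVec_eq_smul hM hv]

end HorizontalMetric

theorem sub_sq_div_add {K : Type*} [Field K] {x y : K} (hxy : x + y ≠ 0) :
    y - y ^ 2 / (x + y) = x * y / (x + y) := by
  field_simp
  ring

/-- The moment of inertia matrix of a three-body system in the body frame of the Jacobi coordinates
`(r₁, r₂, φ)`: the first axis is along `𝐫₁`, and the third is normal to the plane of the bodies. -/
noncomputable def jacobiInertia (r₁ r₂ φ : ℝ) : Matrix (Fin 3) (Fin 3) ℝ :=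
  !![r₂ ^ 2 * sin φ ^ 2, -(r₂ ^ 2 * sin φ * cos φ), 0;
     -(r₂ ^ 2 * sin φ * cos φ), r₁ ^ 2 + r₂ ^ 2 * cos φ ^ 2, 0;
     0, 0, r₁ ^ 2 + r₂ ^ 2]

theorem det_jacobiInertia (r₁ r₂ φ : ℝ) :
    (jacobiInertia r₁ r₂ φ).det = r₁ ^ 2 * r₂ ^ 2 * sin φ ^ 2 * (r₁ ^ 2 + r₂ ^ 2) := by
  simp only [jacobiInertia, det_fin_three, of_apply, cons_val]
  ring

theorem isUnit_det_jacobiInertia {r₁ r₂ φ : ℝ} (hr₁ : r₁ ≠ 0) (hr₂ : r₂ ≠ 0) (hφ : sin φ ≠ 0) :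
    IsUnit (jacobiInertia r₁ r₂ φ).det := by
  rw [det_jacobiInertia, isUnit_iff_ne_zero]
  positivity

theorem jacobiInertia_mulVec_normal (r₁ r₂ φ x : ℝ) :
    jacobiInertia r₁ r₂ φ *ᵥ ![0, 0, x] = (r₁ ^ 2 + r₂ ^ 2) • ![0, 0, x] := by
  ext i
  fin_cases i <;> simp [jacobiInertia, mulVec]

/-- For `r₁ ≠ 0`, `r₂ ≠ 0`, `sin φ ≠ 0`, the horizontal (reduced) metric
`g_{μν} = h_{μν} − a_μᵀ 𝕀⁻¹ a_ν` in Jacobi coordinates, with `h = diag(1,1,r₂²)`,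
`a₁ = a₂ = 0`, `a₃ = (0,0,r₂²)`, equals `diag(1, 1, r₁² r₂²/(r₁² + r₂²))`;
in particular `g₃₃ = r₂² − r₂⁴/(r₁² + r₂²) = r₁² r₂²/(r₁² + r₂²)`. -/
theorem horizontalMetric_jacobi (r₁ r₂ φ : ℝ)
    (hr₁ : r₁ ≠ 0) (hr₂ : r₂ ≠ 0) (hφ : sin φ ≠ 0)
    (𝕀 : Matrix (Fin 3) (Fin 3) ℝ)
    (h𝕀 : 𝕀 = !![r₂ ^ 2 * sin φ ^ 2, -(r₂ ^ 2 * sin φ * cos φ), 0;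
                 -(r₂ ^ 2 * sin φ * cos φ), r₁ ^ 2 + r₂ ^ 2 * cos φ ^ 2, 0;
                 0, 0, r₁ ^ 2 + r₂ ^ 2])
    (h : Matrix (Fin 3) (Fin 3) ℝ)
    (hh : h = !![1, 0, 0; 0, 1, 0; 0, 0, r₂ ^ 2])
    (a : Fin 3 → Fin 3 → ℝ)
    (ha0 : a 0 = 0) (ha1 : a 1 = 0) (ha2 : a 2 = ![0, 0, r₂ ^ 2])
    (g : Matrix (Fin 3) (Fin 3) ℝ)
    (hg : ∀ μ ν, g μ ν = h μ ν - a μ ⬝ᵥ 𝕀⁻¹.mulVec (a ν)) :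
    g = !![1, 0, 0; 0, 1, 0; 0, 0, r₁ ^ 2 * r₂ ^ 2 / (r₁ ^ 2 + r₂ ^ 2)]
      ∧ r₂ ^ 2 - r₂ ^ 4 / (r₁ ^ 2 + r₂ ^ 2) = r₁ ^ 2 * r₂ ^ 2 / (r₁ ^ 2 + r₂ ^ 2) := by
  have hS : r₁ ^ 2 + r₂ ^ 2 ≠ 0 := by positivity
  have hg₃₃ : r₂ ^ 2 - r₂ ^ 4 / (r₁ ^ 2 + r₂ ^ 2) = r₁ ^ 2 * r₂ ^ 2 / (r₁ ^ 2 + r₂ ^ 2) := by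
    rw [← sub_sq_div_add hS, ← pow_mul]
  refine ⟨?_, hg₃₃⟩
  have ha : ∀ μ, μ ≠ 2 → a μ = 0 := by
    intro μ hμ
    fin_cases μ
    exacts [ha0, ha1, absurd rfl hμ]
  have hquad : a 2 ⬝ᵥ 𝕀⁻¹ *ᵥ a 2 = r₂ ^ 4 / (r₁ ^ 2 + r₂ ^ 2) := by
    obtain rfl : 𝕀 = jacobiInertia r₁ r₂ φ := h𝕀
    rw [ha2, dotProduct_inv_mulVec_of_mulVec_eq_smul (isUnit_det_jacobiInertia hr₁ hr₂ hφ) hS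
      (jacobiInertia_mulVec_normal r₁ r₂ φ _)]
    simp [← pow_add]
  calc g = horizontalMetric 𝕀 h a := Matrix.ext hg
    _ = h - single 2 2 (r₂ ^ 4 / (r₁ ^ 2 + r₂ ^ 2)) := by
      rw [horizontalMetric_eq_sub_single 𝕀 h ha, hquad]
    _ = !![1, 0, 0; 0, 1, 0; 0, 0, r₁ ^ 2 * r₂ ^ 2 / (r₁ ^ 2 + r₂ ^ 2)] := by
      rw [hh, ← hg₃₃]
      ext μ ν
      fin_cases μ <;> fin_cases ν <;> simp
end

section
/- Let r₁, r₂, φ, ω₁, ω₂, ω₃, ṙ₁, ṙ₂, φ̇ : ℝ → ℝ be continuous with r₁(t) ≠ 0, r₂(t) ≠ 0 for all t, φ(0) = 0, sin φ(t) ≠ 0 for t ≠ 0 near 0, and ω₂(0) = 0. Define along the motion J₁ = r₂² ω₁ sin² φ − r₂² ω₂ sin φ cos φ, J₂ = −r₂² ω₁ sin φ cos φ + (r₁² + r₂² cos² φ) ω₂, J₃ = (r₁² + r₂²) ω₃ + r₂² φ̇, p₁ = ṙ₁, p₂ = ṙ₂, p₃ = (r₁² r₂²/(r₁² + r₂²))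 φ̇ + (r₂²/(r₁² + r₂²)) J₃, and for t ≠ 0 set H(t) = ½ { ((r₁² + r₂² cos² φ)/(r₁² r₂² sin² φ)) J₁² + (2 cos φ/(r₁² sin φ)) J₁ J₂ + (1/r₁²) J₂² + (1/(r₁² + r₂²)) J₃² + p₁² + p₂² + ((r₁² + r₂²)/(r₁² r₂²)) (p₃ − (r₂²/(r₁² + r₂²)) J₃)² } (all functions evaluated at t). Then H(t) converges as t → 0 to ½ { J₃(0)²/(r₁(0)² + r₂(0)²) + p₁(0)² + p₂(0)² + ((r₁(0)² + r₂(0)²)/(r₁(0)² r₂(0)²)) (p₃(0) − (r₂(0)²/(r₁(0)² + r₂(0)²)) J₃(0))² }, the value of the reduced Hamiltonian computed directly at the collinear configuration. -/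
/-!
The three singular terms of the Hamiltonian are the quadratic form `Jᵀ I⁻¹ J` of the inverse of the
`(1, 2)` block `I` of the inertia tensor, whose determinant `(r₁ r₂ sin φ)²` vanishes at collinear
configurations. Along a motion, however, `J = I ω`, so `Jᵀ I⁻¹ J = J₁ ω₁ + J₂ ω₂`, and this
expression is regular. At `sin φ = 0` it equals `J₂² / (r₁² + r₂²)`, which vanishes when `ω₂` does.
-/

open Real Filter Topology

section PlanarRotation

open scoped Matrix

theorem mulVec_dotProduct_inv_mulVec_mulVec {n R : Type*} [Fintype n] [DecidableEq n] [CommRing R]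
    {A : Matrix n n R} (hA : IsUnit A.det) (v : n → R) :
    A *ᵥ v ⬝ᵥ A⁻¹ *ᵥ (A *ᵥ v) = A *ᵥ v ⬝ᵥ v := by
  rw [Matrix.mulVec_mulVec, Matrix.nonsing_inv_mul A hA, Matrix.one_mulVec]

/-- The `(1, 2)` block of the inertia tensor in Jacobi coordinates; the third body axis, orthogonal
to the plane of the three bodies, decouples from it. -/
noncomputable def planarInertia (r₁ r₂ φ : ℝ) : Matrix (Fin 2) (Fin 2) ℝ :=
  !![r₂ ^ 2 * sin φ ^ 2, -(r₂ ^ 2 * sin φ * cos φ);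
    -(r₂ ^ 2 * sin φ * cos φ), r₁ ^ 2 + r₂ ^ 2 * cos φ ^ 2]

/-- The component `J₁` of the body angular momentum. -/
noncomputable def bodyAngularMomentum₁ (r₂ φ ω₁ ω₂ : ℝ) : ℝ :=
  r₂ ^ 2 * ω₁ * sin φ ^ 2 - r₂ ^ 2 * ω₂ * sin φ * cos φ

/-- The component `J₂` of the body angular momentum. -/
noncomputable def bodyAngularMomentum₂ (r₁ r₂ φ ω₁ ω₂ : ℝ) : ℝ :=
  -(r₂ ^ 2 * ω₁ * sin φ * cos φ) + (r₁ ^ 2 + r₂ ^ 2 * cos φ ^ 2) * ω₂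

/-- The component `J₃` of the body angular momentum; `φ'` is the velocity of `φ`. -/
def bodyAngularMomentum₃ (r₁ r₂ ω₃ φ' : ℝ) : ℝ :=
  (r₁ ^ 2 + r₂ ^ 2) * ω₃ + r₂ ^ 2 * φ'

/-- The momentum `p₃` conjugate to the shape coordinate `φ`, with the body angular momentum `J₃`
in place of the angular velocity. -/
noncomputable def shapeMomentum₃ (r₁ r₂ φ' J₃ : ℝ) : ℝ :=
  r₁ ^ 2 * r₂ ^ 2 / (r₁ ^ 2 + r₂ ^ 2) * φ' + r₂ ^ 2 / (r₁ ^ 2 + r₂ ^ 2) * J₃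

/-- Twice the rotational energy about the two body axes in the plane of the bodies, as a quadratic
form in the angular momentum. It has its meaning only at noncollinear configurations. -/
noncomputable def planarRotationForm (r₁ r₂ φ J₁ J₂ : ℝ) : ℝ :=
  (r₁ ^ 2 + r₂ ^ 2 * cos φ ^ 2) / (r₁ ^ 2 * r₂ ^ 2 * sin φ ^ 2) * J₁ ^ 2
    + 2 * cos φ / (r₁ ^ 2 * sin φ) * (J₁ * J₂) + 1 / r₁ ^ 2 * J₂ ^ 2

variable {r₁ r₂ φ : ℝ}

theorem planarInertia_mulVec (r₁ r₂ φ ω₁ ω₂ : ℝ) :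
    planarInertia r₁ r₂ φ *ᵥ ![ω₁, ω₂] =
      ![bodyAngularMomentum₁ r₂ φ ω₁ ω₂, bodyAngularMomentum₂ r₁ r₂ φ ω₁ ω₂] := by
  ext i
  fin_cases i <;>
    simp [planarInertia, bodyAngularMomentum₁, bodyAngularMomentum₂, Matrix.mulVec, dotProduct] <;>
    ring

theorem det_planarInertia (r₁ r₂ φ : ℝ) :
    (planarInertia r₁ r₂ φ).det = (r₁ * r₂ * sin φ) ^ 2 := by
  rw [planarInertia, Matrix.det_fin_two_of]
  ring

theorem isUnit_det_planarInertia (hr₁ : r₁ ≠ 0) (hr₂ : r₂ ≠ 0) (hφ : sin φ ≠ 0) :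
    IsUnit (planarInertia r₁ r₂ φ).det := by
  rw [det_planarInertia]
  exact (pow_ne_zero 2 (mul_ne_zero (mul_ne_zero hr₁ hr₂) hφ)).isUnit

theorem planarInertia_inv (hr₁ : r₁ ≠ 0) (hr₂ : r₂ ≠ 0) (hφ : sin φ ≠ 0) :
    (planarInertia r₁ r₂ φ)⁻¹ =
      !![(r₁ ^ 2 + r₂ ^ 2 * cos φ ^ 2) / (r₁ ^ 2 * r₂ ^ 2 * sin φ ^ 2), cos φ / (r₁ ^ 2 * sin φ);
        cos φ / (r₁ ^ 2 * sin φ), 1 / r₁ ^ 2] := by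
  refine Matrix.inv_eq_right_inv ?_
  rw [planarInertia, Matrix.mul_fin_two, Matrix.one_fin_two]
  congr! <;> field_simp <;> ring

theorem planarRotationForm_eq_dotProduct_inv (hr₁ : r₁ ≠ 0) (hr₂ : r₂ ≠ 0) (hφ : sin φ ≠ 0)
    (J₁ J₂ : ℝ) :
    planarRotationForm r₁ r₂ φ J₁ J₂ =
      ![J₁, J₂] ⬝ᵥ (planarInertia r₁ r₂ φ)⁻¹ *ᵥ ![J₁, J₂] := by
  simp only [planarInertia_inv hr₁ hr₂ hφ, planarRotationForm, Matrix.mulVec, dotProduct,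
    Fin.sum_univ_two, Matrix.of_apply, Matrix.cons_val_zero, Matrix.cons_val_one]
  ring

theorem planarRotationForm_bodyAngularMomentum (hr₁ : r₁ ≠ 0) (hr₂ : r₂ ≠ 0) (hφ : sin φ ≠ 0)
    (ω₁ ω₂ : ℝ) :
    planarRotationForm r₁ r₂ φ (bodyAngularMomentum₁ r₂ φ ω₁ ω₂)
        (bodyAngularMomentum₂ r₁ r₂ φ ω₁ ω₂) =
      bodyAngularMomentum₁ r₂ φ ω₁ ω₂ * ω₁ + bodyAngularMomentum₂ r₁ r₂ φ ω₁ ω₂ * ω₂ := by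
  rw [planarRotationForm_eq_dotProduct_inv hr₁ hr₂ hφ, ← planarInertia_mulVec,
    mulVec_dotProduct_inv_mulVec_mulVec (isUnit_det_planarInertia hr₁ hr₂ hφ),
    planarInertia_mulVec, Matrix.vec2_dotProduct']

end PlanarRotation

theorem bodyAngularMomentum₁_of_sin_eq_zero {φ : ℝ} (hφ : sin φ = 0) (r₂ ω₁ ω₂ : ℝ) :
    bodyAngularMomentum₁ r₂ φ ω₁ ω₂ = 0 := by
  simp [bodyAngularMomentum₁, hφ]

theorem bodyAngularMomentum₂_of_sin_eq_zero {φ : ℝ} (hφ : sin φ = 0) (r₁ r₂ ω₁ ω₂ : ℝ) :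
    bodyAngularMomentum₂ r₁ r₂ φ ω₁ ω₂ = (r₁ ^ 2 + r₂ ^ 2) * ω₂ := by
  simp [bodyAngularMomentum₂, cos_sq', hφ]

/-- The kinetic energy, doubled, that remains when the rotations about the two body axes in the
plane of the bodies are left out. -/
noncomputable def shapeForm (r₁ r₂ J₃ p₁ p₂ p₃ : ℝ) : ℝ :=
  1 / (r₁ ^ 2 + r₂ ^ 2) * J₃ ^ 2 + p₁ ^ 2 + p₂ ^ 2
    + (r₁ ^ 2 + r₂ ^ 2) / (r₁ ^ 2 * r₂ ^ 2) * (p₃ - r₂ ^ 2 / (r₁ ^ 2 + r₂ ^ 2) * J₃) ^ 2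

/-- The kinetic part of the ro-vibrational Hamiltonian at noncollinear configurations. -/
noncomputable def rovibrationalHamiltonian (r₁ r₂ φ J₁ J₂ J₃ p₁ p₂ p₃ : ℝ) : ℝ :=
  1 / 2 * (planarRotationForm r₁ r₂ φ J₁ J₂ + 1 / (r₁ ^ 2 + r₂ ^ 2) * J₃ ^ 2 + p₁ ^ 2 + p₂ ^ 2
    + (r₁ ^ 2 + r₂ ^ 2) / (r₁ ^ 2 * r₂ ^ 2) * (p₃ - r₂ ^ 2 / (r₁ ^ 2 + r₂ ^ 2) * J₃) ^ 2)

/-- The kinetic part of the ro-vibrational Hamiltonian at collinear configurations, where `J₁`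
vanishes identically and the moments of inertia about the second and third axes agree. -/
noncomputable def collinearHamiltonian (r₁ r₂ J₂ J₃ p₁ p₂ p₃ : ℝ) : ℝ :=
  1 / 2 * ((J₂ ^ 2 + J₃ ^ 2) / (r₁ ^ 2 + r₂ ^ 2) + p₁ ^ 2 + p₂ ^ 2
    + (r₁ ^ 2 + r₂ ^ 2) / (r₁ ^ 2 * r₂ ^ 2) * (p₃ - r₂ ^ 2 / (r₁ ^ 2 + r₂ ^ 2) * J₃) ^ 2)

theorem rovibrationalHamiltonian_eq (r₁ r₂ φ J₁ J₂ J₃ p₁ p₂ p₃ : ℝ) :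
    rovibrationalHamiltonian r₁ r₂ φ J₁ J₂ J₃ p₁ p₂ p₃ =
      1 / 2 * (planarRotationForm r₁ r₂ φ J₁ J₂ + shapeForm r₁ r₂ J₃ p₁ p₂ p₃) := by
  rw [rovibrationalHamiltonian, shapeForm]
  ring

theorem collinearHamiltonian_eq (r₁ r₂ J₂ J₃ p₁ p₂ p₃ : ℝ) :
    collinearHamiltonian r₁ r₂ J₂ J₃ p₁ p₂ p₃ =
      1 / 2 * (J₂ ^ 2 / (r₁ ^ 2 + r₂ ^ 2) + shapeForm r₁ r₂ J₃ p₁ p₂ p₃) := by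
  rw [collinearHamiltonian, shapeForm]
  ring

section Limit

variable {X : Type*} [TopologicalSpace X] {t₀ : X} {r₁ r₂ φ ω₁ ω₂ ω₃ r₁' r₂' φ' : X → ℝ}
  {J₁ J₂ J₃ p₁ p₂ p₃ : X → ℝ}

theorem tendsto_planarRotationForm (hr₁ : ContinuousAt r₁ t₀) (hr₂ : ContinuousAt r₂ t₀)
    (hφ : ContinuousAt φ t₀) (hω₁ : ContinuousAt ω₁ t₀) (hω₂ : ContinuousAt ω₂ t₀)
    (hr₁ne : r₁ t₀ ≠ 0) (hr₂ne : r₂ t₀ ≠ 0) (hφ₀ : sin (φ t₀) = 0)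
    (hφne : ∀ᶠ t in 𝓝[≠] t₀, sin (φ t) ≠ 0)
    (hJ₁ : ∀ t, J₁ t = bodyAngularMomentum₁ (r₂ t) (φ t) (ω₁ t) (ω₂ t))
    (hJ₂ : ∀ t, J₂ t = bodyAngularMomentum₂ (r₁ t) (r₂ t) (φ t) (ω₁ t) (ω₂ t)) :
    Tendsto (fun t => planarRotationForm (r₁ t) (r₂ t) (φ t) (J₁ t) (J₂ t)) (𝓝[≠] t₀)
      (𝓝 (J₂ t₀ ^ 2 / (r₁ t₀ ^ 2 + r₂ t₀ ^ 2))) := by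
  have regular : ContinuousAt (fun t => J₁ t * ω₁ t + J₂ t * ω₂ t) t₀ := by
    simp only [hJ₁, hJ₂, bodyAngularMomentum₁, bodyAngularMomentum₂]
    fun_prop
  have value : J₁ t₀ * ω₁ t₀ + J₂ t₀ * ω₂ t₀ = J₂ t₀ ^ 2 / (r₁ t₀ ^ 2 + r₂ t₀ ^ 2) := by
    rw [hJ₁, hJ₂, bodyAngularMomentum₁_of_sin_eq_zero hφ₀, bodyAngularMomentum₂_of_sin_eq_zero hφ₀]
    field_simp
    ring
  rw [← value]
  refine regular.tendsto.mono_left nhdsWithin_le_nhds |>.congr' ?_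
  filter_upwards [hφne, (hr₁.eventually_ne hr₁ne).filter_mono nhdsWithin_le_nhds,
    (hr₂.eventually_ne hr₂ne).filter_mono nhdsWithin_le_nhds] with t hφt hr₁t hr₂t
  rw [hJ₁, hJ₂, planarRotationForm_bodyAngularMomentum hr₁t hr₂t hφt]

theorem continuousAt_shapeForm (hr₁ : ContinuousAt r₁ t₀) (hr₂ : ContinuousAt r₂ t₀)
    (hr₁ne : r₁ t₀ ≠ 0) (hr₂ne : r₂ t₀ ≠ 0) (hJ₃ : ContinuousAt J₃ t₀)
    (hp₁ : ContinuousAt p₁ t₀) (hp₂ : ContinuousAt p₂ t₀) (hp₃ : ContinuousAt p₃ t₀) :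
    ContinuousAt (fun t => shapeForm (r₁ t) (r₂ t) (J₃ t) (p₁ t) (p₂ t) (p₃ t)) t₀ := by
  unfold shapeForm
  fun_prop (disch := positivity)

theorem rovibrational_hamiltonian_collinear_limit_general {H : X → ℝ}
    (hr₁ : ContinuousAt r₁ t₀) (hr₂ : ContinuousAt r₂ t₀) (hφ : ContinuousAt φ t₀)
    (hω₁ : ContinuousAt ω₁ t₀) (hω₂ : ContinuousAt ω₂ t₀) (hω₃ : ContinuousAt ω₃ t₀)
    (hr₁' : ContinuousAt r₁' t₀) (hr₂' : ContinuousAt r₂' t₀) (hφ' : ContinuousAt φ' t₀)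
    (hr₁ne : r₁ t₀ ≠ 0) (hr₂ne : r₂ t₀ ≠ 0) (hφ₀ : sin (φ t₀) = 0)
    (hφne : ∀ᶠ t in 𝓝[≠] t₀, sin (φ t) ≠ 0)
    (hJ₁ : ∀ t, J₁ t = bodyAngularMomentum₁ (r₂ t) (φ t) (ω₁ t) (ω₂ t))
    (hJ₂ : ∀ t, J₂ t = bodyAngularMomentum₂ (r₁ t) (r₂ t) (φ t) (ω₁ t) (ω₂ t))
    (hJ₃ : ∀ t, J₃ t = bodyAngularMomentum₃ (r₁ t) (r₂ t) (ω₃ t) (φ' t))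
    (hp₁ : ∀ t, p₁ t = r₁' t) (hp₂ : ∀ t, p₂ t = r₂' t)
    (hp₃ : ∀ t, p₃ t = shapeMomentum₃ (r₁ t) (r₂ t) (φ' t) (J₃ t))
    (hH : ∀ t, t ≠ t₀ → H t = rovibrationalHamiltonian (r₁ t) (r₂ t) (φ t) (J₁ t) (J₂ t) (J₃ t)
      (p₁ t) (p₂ t) (p₃ t)) :
    Tendsto H (𝓝[≠] t₀)
      (𝓝 (collinearHamiltonian (r₁ t₀) (r₂ t₀) (J₂ t₀) (J₃ t₀) (p₁ t₀) (p₂ t₀) (p₃ t₀))) := by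
  obtain rfl : p₁ = r₁' := funext hp₁
  obtain rfl : p₂ = r₂' := funext hp₂
  have hJ₃c : ContinuousAt J₃ t₀ := by
    simp only [funext hJ₃, bodyAngularMomentum₃]
    fun_prop
  have hp₃c : ContinuousAt p₃ t₀ := by
    simp only [funext hp₃, shapeMomentum₃]
    fun_prop (disch := positivity)
  have planar := tendsto_planarRotationForm hr₁ hr₂ hφ hω₁ hω₂ hr₁ne hr₂ne hφ₀ hφne hJ₁ hJ₂
  have shape := (continuousAt_shapeForm hr₁ hr₂ hr₁ne hr₂ne hJ₃c hr₁' hr₂' hp₃c).tendsto.mono_left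
    (nhdsWithin_le_nhds (s := {t₀}ᶜ))
  rw [collinearHamiltonian_eq]
  refine ((planar.add shape).const_mul (1 / 2)).congr' ?_
  filter_upwards [self_mem_nhdsWithin] with t ht
  rw [hH t ht, rovibrationalHamiltonian_eq]

end Limit

/-- Along a motion of a three-body system passing through a collinear
configuration at `t = 0` (with `ω₂(0) = 0`), the ro-vibrational Hamiltonian
(kinetic part) extends continuously: `H(t)` converges as `t → 0` to the value
of the reduced Hamiltonian computed directly at the collinear configuration. -/
theorem rovibrational_hamiltonian_collinear_limit
    (r₁ r₂ φ ω₁ ω₂ ω₃ r₁' r₂' φ' : ℝ → ℝ)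
    (hr₁ : Continuous r₁) (hr₂ : Continuous r₂) (hφ : Continuous φ)
    (hω₁ : Continuous ω₁) (hω₂ : Continuous ω₂) (hω₃ : Continuous ω₃)
    (hr₁' : Continuous r₁') (hr₂' : Continuous r₂') (hφ' : Continuous φ')
    (hr₁ne : ∀ t, r₁ t ≠ 0) (hr₂ne : ∀ t, r₂ t ≠ 0)
    (hφ0 : φ 0 = 0)
    (hφne : ∀ᶠ t in 𝓝[≠] (0 : ℝ), sin (φ t) ≠ 0)
    (hω₂0 : ω₂ 0 = 0)
    (J₁ J₂ J₃ p₁ p₂ p₃ H : ℝ → ℝ)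
    (hJ₁ : ∀ t, J₁ t = r₂ t ^ 2 * ω₁ t * sin (φ t) ^ 2
        - r₂ t ^ 2 * ω₂ t * sin (φ t) * cos (φ t))
    (hJ₂ : ∀ t, J₂ t = -(r₂ t ^ 2 * ω₁ t * sin (φ t) * cos (φ t))
        + (r₁ t ^ 2 + r₂ t ^ 2 * cos (φ t) ^ 2) * ω₂ t)
    (hJ₃ : ∀ t, J₃ t = (r₁ t ^ 2 + r₂ t ^ 2) * ω₃ t + r₂ t ^ 2 * φ' t)
    (hp₁ : ∀ t, p₁ t = r₁' t) (hp₂ : ∀ t, p₂ t = r₂' t)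
    (hp₃ : ∀ t, p₃ t = r₁ t ^ 2 * r₂ t ^ 2 / (r₁ t ^ 2 + r₂ t ^ 2) * φ' t
        + r₂ t ^ 2 / (r₁ t ^ 2 + r₂ t ^ 2) * J₃ t)
    (hH : ∀ t, t ≠ 0 → H t = (1 / 2 : ℝ) *
        ((r₁ t ^ 2 + r₂ t ^ 2 * cos (φ t) ^ 2) / (r₁ t ^ 2 * r₂ t ^ 2 * sin (φ t) ^ 2)
            * J₁ t ^ 2
          + 2 * cos (φ t) / (r₁ t ^ 2 * sin (φ t)) * (J₁ t * J₂ t)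
          + 1 / r₁ t ^ 2 * J₂ t ^ 2
          + 1 / (r₁ t ^ 2 + r₂ t ^ 2) * J₃ t ^ 2
          + p₁ t ^ 2 + p₂ t ^ 2
          + (r₁ t ^ 2 + r₂ t ^ 2) / (r₁ t ^ 2 * r₂ t ^ 2)
            * (p₃ t - r₂ t ^ 2 / (r₁ t ^ 2 + r₂ t ^ 2) * J₃ t) ^ 2)) :
    Tendsto H (𝓝[≠] (0 : ℝ))
      (𝓝 ((1 / 2 : ℝ) *
        (J₃ 0 ^ 2 / (r₁ 0 ^ 2 + r₂ 0 ^ 2) + p₁ 0 ^ 2 + p₂ 0 ^ 2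
          + (r₁ 0 ^ 2 + r₂ 0 ^ 2) / (r₁ 0 ^ 2 * r₂ 0 ^ 2)
            * (p₃ 0 - r₂ 0 ^ 2 / (r₁ 0 ^ 2 + r₂ 0 ^ 2) * J₃ 0) ^ 2))) := by
  simpa [collinearHamiltonian, hJ₂ 0, hφ0, hω₂0] using
    rovibrational_hamiltonian_collinear_limit_general hr₁.continuousAt hr₂.continuousAt
      hφ.continuousAt hω₁.continuousAt hω₂.continuousAt hω₃.continuousAt hr₁'.continuousAt
      hr₂'.continuousAt hφ'.continuousAt (hr₁ne 0) (hr₂ne 0) (by rw [hφ0, sin_zero]) hφne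
      hJ₁ hJ₂ hJ₃ hp₁ hp₂ hp₃ hH
end
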